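/- Let Ω ⊂ ℝ^N be a bounded domain, s ∈ (0,1), p ∈ (1,∞). The operator A : W₀^(s,p)(Ω) → (W₀^(s,p)(Ω))* defined by ⟨A(u), v⟩ = ∫∫_{ℝ^{2N}} |u(x)-u(y)|^(p-2)(u(x)-u(y))(v(x)-v(y)) / |x-y|^(N+sp) dx dy is of type (S₊): if u_n ⇀ u weakly in W₀^(s,p)(Ω) and limsup_{n→∞} ⟨A(u_n), u_n - u⟩ ≤ 0, then u_n → u strongly in W₀^(s,p)(Ω). -/

import Mathlib

open MeasureTheory Metric Set Filter

noncomputable section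

/-- The Gagliardo `p`-energy `‖u‖^p = ∫∫ |u(x)-u(y)|^p / |x-y|^{N+sp} dx dy`. -/
def gagE (N : ℕ) (s p : ℝ) (u : EuclideanSpace ℝ (Fin N) → ℝ) : ℝ :=
  ∫ x, ∫ y, |u x - u y| ^ p / ‖x - y‖ ^ ((N : ℝ) + s * p)

/-- The Gagliardo norm of `W₀^{s,p}`. -/
def gagNorm (N : ℕ) (s p : ℝ) (u : EuclideanSpace ℝ (Fin N) → ℝ) : ℝ :=
  gagE N s p u ^ (1 / p)

/-- Membership in `W₀^{s,p}(Ω)`: measurable, finite Gagliardo energy, vanishing outside `Ω`. -/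
def memW0 (N : ℕ) (s p : ℝ) (Ω : Set (EuclideanSpace ℝ (Fin N)))
    (u : EuclideanSpace ℝ (Fin N) → ℝ) : Prop :=
  Measurable u ∧
  Integrable (fun z : EuclideanSpace ℝ (Fin N) × EuclideanSpace ℝ (Fin N) =>
    |u z.1 - u z.2| ^ p / ‖z.1 - z.2‖ ^ ((N : ℝ) + s * p)) ∧
  ∀ x, x ∉ Ω → u x = 0

/-- The fractional `p`-Laplacian pairing `⟨A u, v⟩`. -/
def fracPair (N : ℕ) (s p : ℝ) (u v : EuclideanSpace ℝ (Fin N) → ℝ) : ℝ :=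
  ∫ x, ∫ y, |u x - u y| ^ (p - 2) * (u x - u y) * (v x - v y) / ‖x - y‖ ^ ((N : ℝ) + s * p)

/-- `q` is below the critical exponent `p*ₛ = Np/(N-sp)` (`= ∞` if `sp ≥ N`). -/
def subCrit (N : ℕ) (s p q : ℝ) : Prop :=
  s * p < N → q < N * p / ((N : ℝ) - s * p)

/-- The class `W_q`: `h ρ^{sa} ∈ L^r(Ω)` for some `a ∈ [0,q)`, `r ∈ (1,∞)` with
`1/r + a/p + (q-a)/p*ₛ < 1` (the last term read as `0` when `p*ₛ = ∞`). -/
def inWq (N : ℕ) (Ω : Set (EuclideanSpace ℝ (Fin N))) (s p q : ℝ)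
    (h : EuclideanSpace ℝ (Fin N) → ℝ) : Prop :=
  ∃ a r : ℝ, 0 ≤ a ∧ a < q ∧ 1 < r ∧
    ((s * p < N ∧ 1 / r + a / p + (q - a) * ((N : ℝ) - s * p) / ((N : ℝ) * p) < 1) ∨
      (¬ s * p < N ∧ 1 / r + a / p < 1)) ∧
    IntegrableOn (fun x => |h x * infDist x (frontier Ω) ^ (s * a)| ^ r) Ω

/-- The class `W̃_q`: `h ρ^{sa} ∈ L^r(Ω)` for some `a ∈ [0,1]`, `r ∈ (1,∞)` with
`1/r + a/p + (max{p,q}-a)/p*ₛ < 1`. -/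
def inWtq (N : ℕ) (Ω : Set (EuclideanSpace ℝ (Fin N))) (s p q : ℝ)
    (h : EuclideanSpace ℝ (Fin N) → ℝ) : Prop :=
  ∃ a r : ℝ, 0 ≤ a ∧ a ≤ 1 ∧ 1 < r ∧
    ((s * p < N ∧
        1 / r + a / p + (max p q - a) * ((N : ℝ) - s * p) / ((N : ℝ) * p) < 1) ∨
      (¬ s * p < N ∧ 1 / r + a / p < 1)) ∧
    IntegrableOn (fun x => |h x * infDist x (frontier Ω) ^ (s * a)| ^ r) Ω

/-- Weak convergence `uₙ ⇀ u` in `W₀^{s,p}(Ω)`: bounded Gagliardo norms together with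
convergence against all continuous compactly supported test functions (a total family in
the dual `W^{-s,p'}(Ω)`). -/
def weakConv (N : ℕ) (s p : ℝ) (u_ : ℕ → EuclideanSpace ℝ (Fin N) → ℝ)
    (u : EuclideanSpace ℝ (Fin N) → ℝ) : Prop :=
  (∃ M : ℝ, ∀ n, gagNorm N s p (u_ n) ≤ M) ∧
  ∀ φ : EuclideanSpace ℝ (Fin N) → ℝ, Continuous φ → HasCompactSupport φ →
    Tendsto (fun n => ∫ x, u_ n x * φ x) atTop (nhds (∫ x, u x * φ x))

/-- The first eigenvalue `λ₁ = inf{‖u‖^p : u ∈ W₀^{s,p}(Ω), ∫_Ω h|u|^p = 1}`. -/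
def lam1 (N : ℕ) (s p : ℝ) (Ω : Set (EuclideanSpace ℝ (Fin N)))
    (h : EuclideanSpace ℝ (Fin N) → ℝ) : ℝ :=
  sInf {t : ℝ | ∃ u, memW0 N s p Ω u ∧ (∫ x in Ω, h x * |u x| ^ p) = 1 ∧ t = gagE N s p u}

/-- `(λ, u)` is an eigenpair of `(-Δ)ₚˢ u = λ h |u|^{p-2} u` in `Ω`, `u = 0` outside `Ω`. -/
def isEigenpair (N : ℕ) (s p : ℝ) (Ω : Set (EuclideanSpace ℝ (Fin N)))
    (h : EuclideanSpace ℝ (Fin N) → ℝ) (lam : ℝ)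
    (u : EuclideanSpace ℝ (Fin N) → ℝ) : Prop :=
  memW0 N s p Ω u ∧ ¬ (∀ᵐ x ∂volume.restrict Ω, u x = 0) ∧
  ∀ v, memW0 N s p Ω v →
    fracPair N s p u v = lam * ∫ x in Ω, h x * |u x| ^ (p - 2) * u x * v x

def ph (p a : ℝ) : ℝ := |a| ^ (p - 2) * a

lemma ph_eq {p : ℝ} (hp : 1 < p) (a : ℝ) :
    ph p a = (max a 0) ^ (p - 1) - (max (-a) 0) ^ (p - 1) := by
  have hp1 : p - 1 ≠ 0 := by linarith
  have key : ∀ t : ℝ, 0 < t → t ^ (p - 2) * t = t ^ (p - 1) := by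
    intro t ht
    rw [show p - 1 = (p - 2) + 1 by ring, Real.rpow_add_one ht.ne']
  unfold ph
  rcases lt_trichotomy a 0 with h | h | h
  · rw [abs_of_neg h, max_eq_right h.le, max_eq_left (by linarith), Real.zero_rpow hp1,
      ← key (-a) (by linarith)]
    ring
  · subst h; simp
  · rw [abs_of_pos h, max_eq_left h.le, max_eq_right (by linarith), Real.zero_rpow hp1,
      ← key a h]
    ring

lemma ph_cont {p : ℝ} (hp : 1 < p) : Continuous (ph p) := by
  have : ph p = fun a => (max a 0) ^ (p - 1) - (max (-a) 0) ^ (p - 1) := funext (ph_eq hp)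
  rw [this]
  have h : 0 ≤ p - 1 := by linarith
  exact ((continuous_id.max continuous_const).rpow_const (fun _ => Or.inr h)).sub
    ((continuous_neg.max continuous_const).rpow_const (fun _ => Or.inr h))

lemma ph_abs {p : ℝ} (hp : 1 < p) (a : ℝ) : |ph p a| = |a| ^ (p - 1) := by
  unfold ph
  rw [abs_mul, abs_of_nonneg (Real.rpow_nonneg (abs_nonneg a) _)]
  rcases eq_or_ne a 0 with h | h
  · subst h; simp [Real.zero_rpow (show p - 1 ≠ 0 by linarith)]
  · rw [show p - 1 = (p - 2) + 1 by ring, Real.rpow_add_one (abs_pos.2 h).ne']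

lemma ph_mono {p : ℝ} (hp : 1 < p) : StrictMono (ph p) := by
  intro a b hab
  rw [ph_eq hp, ph_eq hp]
  have h0 : 0 < p - 1 := by linarith
  have h1 : (max a 0) ^ (p - 1) ≤ (max b 0) ^ (p - 1) :=
    Real.rpow_le_rpow (le_max_right _ _) (max_le_max hab.le le_rfl) h0.le
  have h2 : (max (-b) 0) ^ (p - 1) ≤ (max (-a) 0) ^ (p - 1) :=
    Real.rpow_le_rpow (le_max_right _ _) (max_le_max (by linarith) le_rfl) h0.le
  rcases le_or_gt b 0 with hb | hb
  · have : (max (-b) 0) ^ (p - 1) < (max (-a) 0) ^ (p - 1) := by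
      apply Real.rpow_lt_rpow (le_max_right _ _) _ h0
      rw [max_eq_left (by linarith), max_eq_left (by linarith)]; linarith
    linarith
  · have : (max a 0) ^ (p - 1) < (max b 0) ^ (p - 1) := by
      apply Real.rpow_lt_rpow (le_max_right _ _) _ h0
      rw [max_eq_left hb.le]; exact max_lt hab hb
    linarith

lemma ph_pos {p : ℝ} (hp : 1 < p) {a b : ℝ} (h : a ≠ b) :
    0 < (ph p a - ph p b) * (a - b) := by
  rcases lt_or_gt_of_ne h with h | h
  · have := ph_mono hp h; exact mul_pos_of_neg_of_neg (by linarith) (by linarith)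
  · have := ph_mono hp h; exact mul_pos (by linarith) (by linarith)

lemma ph_smul {p : ℝ} {t : ℝ} (ht : 0 < t) (a : ℝ) :
    ph p (t * a) = t ^ (p - 1) * ph p a := by
  unfold ph
  rw [abs_mul, abs_of_pos ht, Real.mul_rpow ht.le (abs_nonneg a),
    show p - 1 = (p - 2) + 1 by ring, Real.rpow_add_one ht.ne']
  ring

lemma ph_key {p : ℝ} (hp : 1 < p) {ε : ℝ} (hε : 0 < ε) :
    ∃ C : ℝ, 0 ≤ C ∧ ∀ a b : ℝ, |a - b| ^ p ≤ ε * (|a| ^ p + |b| ^ p) +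
      C * ((ph p a - ph p b) * (a - b)) := by
  have hp0 : 0 < p := by linarith
  have hcp : ∀ f : ℝ × ℝ → ℝ, Continuous f → Continuous (fun z => |f z| ^ p) := fun f hf =>
    hf.abs.rpow_const (fun _ => Or.inr hp0.le)
  have hc1 : Continuous (fun z : ℝ × ℝ => |z.1 - z.2| ^ p) := hcp _ (by fun_prop)
  have hc2 : Continuous (fun z : ℝ × ℝ => ε * (|z.1| ^ p + |z.2| ^ p)) :=
    continuous_const.mul ((hcp _ continuous_fst).add (hcp _ continuous_snd))
  have hc3 : Continuous (fun z : ℝ × ℝ => (ph p z.1 - ph p z.2) * (z.1 - z.2)) := by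
    have := ph_cont hp
    fun_prop
  let K : Set (ℝ × ℝ) := sphere 0 1 ∩ {z | ε * (|z.1| ^ p + |z.2| ^ p) ≤ |z.1 - z.2| ^ p}
  have hK : IsCompact K := (isCompact_sphere 0 1).inter_right (isClosed_le hc2 hc1)
  have hm : ∃ m : ℝ, 0 < m ∧ ∀ z ∈ K, m ≤ (ph p z.1 - ph p z.2) * (z.1 - z.2) := by
    rcases K.eq_empty_or_nonempty with h | h
    · exact ⟨1, one_pos, by simp [h]⟩
    · obtain ⟨z, hz, hmin⟩ := hK.exists_isMinOn h hc3.continuousOn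
      refine ⟨_, ph_pos hp ?_, fun y hy => hmin hy⟩
      intro he
      obtain ⟨hz1, hz2⟩ := hz
      simp only [mem_ofPred_eq, he, sub_self, abs_zero, Real.zero_rpow hp0.ne'] at hz2
      have h2 : z.2 ≠ 0 := by
        intro h2
        have : z = 0 := Prod.ext (he.trans h2) h2
        simp [this] at hz1
      have := Real.rpow_pos_of_pos (abs_pos.2 h2) p
      nlinarith
  obtain ⟨m, hm0, hm⟩ := hm
  refine ⟨2 ^ p / m, by positivity, ?_⟩
  have unit : ∀ z ∈ sphere (0 : ℝ × ℝ) 1, |z.1 - z.2| ^ p ≤ ε * (|z.1| ^ p + |z.2| ^ p) +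
      2 ^ p / m * ((ph p z.1 - ph p z.2) * (z.1 - z.2)) := by
    intro z hz
    by_cases h : ε * (|z.1| ^ p + |z.2| ^ p) ≤ |z.1 - z.2| ^ p
    · have h1 := hm z ⟨hz, h⟩
      have hn : ‖z‖ = 1 := by simpa using hz
      have h3 : |z.1 - z.2| ≤ 2 := by
        have a1 := norm_fst_le z
        have a2 := norm_snd_le z
        have := abs_sub z.1 z.2
        simp only [Real.norm_eq_abs] at a1 a2
        linarith
      have h4 : |z.1 - z.2| ^ p ≤ 2 ^ p := Real.rpow_le_rpow (abs_nonneg _) h3 hp0.le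
      have h5 : 2 ^ p / m * m ≤ 2 ^ p / m * ((ph p z.1 - ph p z.2) * (z.1 - z.2)) := by gcongr
      rw [div_mul_cancel₀ _ hm0.ne'] at h5
      have h6 : 0 ≤ ε * (|z.1| ^ p + |z.2| ^ p) := by positivity
      linarith
    · have : 0 ≤ (ph p z.1 - ph p z.2) * (z.1 - z.2) := by
        rcases eq_or_ne z.1 z.2 with h | h
        · simp [h]
        · exact (ph_pos hp h).le
      have : 0 ≤ 2 ^ p / m * ((ph p z.1 - ph p z.2) * (z.1 - z.2)) := by positivity
      linarith
  intro a b
  rcases eq_or_ne ((a, b) : ℝ × ℝ) 0 with h | h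
  · simp only [Prod.mk_eq_zero] at h
    simp [h.1, h.2, Real.zero_rpow hp0.ne']
  · set t : ℝ := ‖((a, b) : ℝ × ℝ)‖ with ht
    have ht0 : 0 < t := norm_pos_iff.2 h
    have hu := unit (t⁻¹ • (a, b)) (by
      rw [mem_sphere_zero_iff_norm, norm_smul, norm_inv, norm_norm]
      exact inv_mul_cancel₀ ht0.ne')
    have hi : 0 < t⁻¹ := by positivity
    simp only [Prod.smul_mk, smul_eq_mul, ph_smul hi, ← mul_sub, abs_mul, abs_of_pos hi,
      Real.mul_rpow hi.le (abs_nonneg _)] at hu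
    have e1 : (t⁻¹) ^ p = (t⁻¹) ^ (p - 1) * t⁻¹ := by
      rw [← Real.rpow_add_one hi.ne']; ring_nf
    have e2 : 0 < (t⁻¹) ^ p := by positivity
    refine le_of_mul_le_mul_left (hu.trans (le_of_eq ?_)) e2
    rw [e1]; ring

lemma young0 {p : ℝ} (hp : 1 < p) {x y : ℝ} (hx : 0 ≤ x) (hy : 0 ≤ y) :
    x ^ (p - 1) * y ≤ x ^ p + y ^ p := by
  have e : ∀ t : ℝ, 0 ≤ t → t ^ (p - 1) * t = t ^ p := by
    intro t ht
    rcases ht.eq_or_lt with h | h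
    · subst h; simp [Real.zero_rpow (show p ≠ 0 by linarith)]
    · rw [← Real.rpow_add_one h.ne']; ring_nf
  rcases le_total x y with h | h
  · calc x ^ (p - 1) * y ≤ y ^ (p - 1) * y := by
          gcongr
      _ = y ^ p := e y hy
      _ ≤ _ := by have := Real.rpow_nonneg hx p; linarith
  · calc x ^ (p - 1) * y ≤ x ^ (p - 1) * x := by gcongr
      _ = x ^ p := e x hx
      _ ≤ _ := by have := Real.rpow_nonneg hy p; linarith

lemma young1 {p : ℝ} (hp : 1 < p) {ε : ℝ} (hε : 0 < ε) : ∃ C : ℝ, 0 ≤ C ∧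
    ∀ x y : ℝ, 0 ≤ x → 0 ≤ y → x ^ (p - 1) * y ≤ C * x ^ p + ε * y ^ p := by
  have hp0 : 0 < p := by linarith
  have hq : 0 < (p - 1) * p := by nlinarith
  set l : ℝ := ε ^ (1 / ((p - 1) * p)) with hl
  have hl0 : 0 < l := by positivity
  have hle : (l ^ (p - 1)) ^ p = ε := by
    rw [← Real.rpow_mul hl0.le, hl, ← Real.rpow_mul hε.le, one_div_mul_cancel hq.ne', Real.rpow_one]
  refine ⟨(l⁻¹) ^ p, by positivity, fun x y hx hy => ?_⟩
  have := young0 hp (x := l⁻¹ * x) (y := l ^ (p - 1) * y) (by positivity) (by positivity)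
  rw [Real.mul_rpow (by positivity) hx, Real.mul_rpow (by positivity) hx,
    Real.mul_rpow (by positivity) hy, hle] at this
  refine le_trans (le_of_eq ?_) this
  have : (l⁻¹) ^ (p - 1) * l ^ (p - 1) = 1 := by
    rw [← Real.mul_rpow (by positivity) hl0.le, inv_mul_cancel₀ hl0.ne', Real.one_rpow]
  linear_combination (-(x ^ (p - 1) * y)) * this

lemma abs_sub_rpow_le {p : ℝ} (hp : 1 < p) (a b : ℝ) :
    |a - b| ^ p ≤ 2 ^ p * (|a| ^ p + |b| ^ p) := by
  have hp0 : 0 < p := by linarith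
  have h1 : |a - b| ≤ 2 * max |a| |b| := by
    have := abs_sub a b
    have := le_max_left |a| |b|
    have := le_max_right |a| |b|
    linarith
  have h0 : 0 ≤ max |a| |b| := le_max_of_le_left (abs_nonneg a)
  calc |a - b| ^ p ≤ (2 * max |a| |b|) ^ p := Real.rpow_le_rpow (abs_nonneg _) h1 hp0.le
    _ = 2 ^ p * (max |a| |b|) ^ p := Real.mul_rpow (by norm_num) h0
    _ ≤ _ := by
      gcongr
      have := Real.rpow_nonneg (abs_nonneg a) p
      have := Real.rpow_nonneg (abs_nonneg b) p
      rcases max_choice |a| |b| with h | h <;> rw [h] <;> linarith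

section abs
variable {X : Type*} [MeasurableSpace X] {μ : Measure X} {w : X → ℝ} {p : ℝ}

lemma int_sub (hp : 1 < p) (hw : Measurable w) (hw0 : ∀ x, 0 ≤ w x) {a b : X → ℝ}
    (ha : Measurable a) (hb : Measurable b)
    (hai : Integrable (fun x => |a x| ^ p * w x) μ)
    (hbi : Integrable (fun x => |b x| ^ p * w x) μ) :
    Integrable (fun x => |a x - b x| ^ p * w x) μ := by
  refine ((hai.add hbi).const_mul (2 ^ p)).mono' (by fun_prop) (ae_of_all _ fun x => ?_)
  rw [Real.norm_eq_abs, abs_of_nonneg (mul_nonneg (Real.rpow_nonneg (abs_nonneg _) _) (hw0 x))]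
  have := mul_le_mul_of_nonneg_right (abs_sub_rpow_le hp (a x) (b x)) (hw0 x)
  simp only [Pi.add_apply]
  linarith

lemma ph_bound (hp : 1 < p) (hw0 : ∀ x, 0 ≤ w x) (a b : X → ℝ) (x : X) :
    |ph p (a x) * b x * w x| ≤ |a x| ^ p * w x + |b x| ^ p * w x := by
  rw [abs_mul, abs_mul, ph_abs hp, abs_of_nonneg (hw0 x), ← add_mul]
  exact mul_le_mul_of_nonneg_right (young0 hp (abs_nonneg _) (abs_nonneg _)) (hw0 x)

lemma int_pair (hp : 1 < p) (hw : Measurable w) (hw0 : ∀ x, 0 ≤ w x) {a b : X → ℝ}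
    (ha : Measurable a) (hb : Measurable b)
    (hai : Integrable (fun x => |a x| ^ p * w x) μ)
    (hbi : Integrable (fun x => |b x| ^ p * w x) μ) :
    Integrable (fun x => ph p (a x) * b x * w x) μ := by
  have := (ph_cont hp).measurable
  refine (hai.add hbi).mono' (by fun_prop) (ae_of_all _ fun x => ?_)
  exact ph_bound hp hw0 a b x

lemma abs_main (hp : 1 < p) (hw : Measurable w) (hw0 : ∀ x, 0 ≤ w x)
    {a_ : ℕ → X → ℝ} {a : X → ℝ}
    (ha_ : ∀ n, Measurable (a_ n)) (ha : Measurable a)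
    (hai_ : ∀ n, Integrable (fun x => |a_ n x| ^ p * w x) μ)
    (hai : Integrable (fun x => |a x| ^ p * w x) μ)
    {M : ℝ} (hM : ∀ n, ∫ x, |a_ n x| ^ p * w x ∂μ ≤ M)
    (h1 : Tendsto (fun n => ∫ x, ph p (a x) * (a_ n x - a x) * w x ∂μ) atTop (nhds 0))
    (h2 : limsup (fun n => ∫ x, ph p (a_ n x) * (a_ n x - a x) * w x ∂μ) atTop ≤ 0) :
    Tendsto (fun n => ∫ x, |a_ n x - a x| ^ p * w x ∂μ) atTop (nhds 0) := by
  have hsub := fun n => int_sub hp hw hw0 (ha_ n) ha (hai_ n) hai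
  have hp1 := fun n => int_pair hp hw hw0 ha ((ha_ n).sub ha) hai (hsub n)
  have hp2 := fun n => int_pair hp hw hw0 (ha_ n) ((ha_ n).sub ha) (hai_ n) (hsub n)
  simp only [Pi.sub_apply] at hp1 hp2
  set M' : ℝ := ∫ x, |a x| ^ p * w x ∂μ with hM'
  have hM'0 : 0 ≤ M' := integral_nonneg fun x =>
    mul_nonneg (Real.rpow_nonneg (abs_nonneg _) _) (hw0 x)
  have hM0 : 0 ≤ M := le_trans (integral_nonneg fun x =>
    mul_nonneg (Real.rpow_nonneg (abs_nonneg _) _) (hw0 x)) (hM 0)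
  have hsubM : ∀ n, ∫ x, |a_ n x - a x| ^ p * w x ∂μ ≤ 2 ^ p * (M + M') := by
    intro n
    calc _ ≤ ∫ x, 2 ^ p * (|a_ n x| ^ p * w x + |a x| ^ p * w x) ∂μ := by
          refine integral_mono (hsub n) (((hai_ n).add hai).const_mul _) fun x => ?_
          have := mul_le_mul_of_nonneg_right (abs_sub_rpow_le hp (a_ n x) (a x)) (hw0 x)
          simp only
          linarith
      _ = 2 ^ p * ((∫ x, |a_ n x| ^ p * w x ∂μ) + M') := by
          rw [integral_const_mul, integral_add (hai_ n) hai]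
      _ ≤ _ := by have := hM n; gcongr
  have hbd : IsBoundedUnder (· ≤ ·) atTop
      (fun n => ∫ x, ph p (a_ n x) * (a_ n x - a x) * w x ∂μ) := by
    refine isBoundedUnder_of ⟨M + 2 ^ p * (M + M'), fun n => ?_⟩
    calc _ ≤ ∫ x, (|a_ n x| ^ p * w x + |a_ n x - a x| ^ p * w x) ∂μ := by
          refine integral_mono (hp2 n) ((hai_ n).add (hsub n)) fun x => ?_
          exact (le_abs_self _).trans (ph_bound hp hw0 (a_ n) (fun x => a_ n x - a x) x)
      _ = _ := integral_add (hai_ n) (hsub n)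
      _ ≤ _ := add_le_add (hM n) (hsubM n)
  rw [Metric.tendsto_atTop']
  suffices H : ∀ ε > 0, ∀ᶠ n in atTop, ∫ x, |a_ n x - a x| ^ p * w x ∂μ < ε by
    intro ε hε
    obtain ⟨n0, hn0⟩ := eventually_atTop.1 (H ε hε)
    refine ⟨n0, fun n hn => ?_⟩
    rw [Real.dist_eq, sub_zero, abs_of_nonneg (integral_nonneg fun x =>
      mul_nonneg (Real.rpow_nonneg (abs_nonneg _) _) (hw0 x))]
    exact hn0 n hn.le
  intro ε hε
  obtain ⟨C, hC0, hC⟩ := ph_key hp (ε := ε / (2 * (M + M' + 1))) (by positivity)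
  set δ : ℝ := ε / (4 * (C + 1)) with hδ
  have hδ0 : 0 < δ := by positivity
  filter_upwards [eventually_lt_of_limsup_lt (lt_of_le_of_lt h2 hδ0) hbd,
    h1.eventually (lt_mem_nhds (neg_lt_zero.2 hδ0))] with n hn1 hn2
  have : ∫ x, |a_ n x - a x| ^ p * w x ∂μ ≤ ∫ x, (ε / (2 * (M + M' + 1)) *
      (|a_ n x| ^ p * w x + |a x| ^ p * w x) + C * (ph p (a_ n x) * (a_ n x - a x) * w x
        - ph p (a x) * (a_ n x - a x) * w x)) ∂μ := by
    refine integral_mono (hsub n) ((((hai_ n).add hai).const_mul _).add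
      (((hp2 n).sub (hp1 n)).const_mul C)) fun x => ?_
    have := mul_le_mul_of_nonneg_right (hC (a_ n x) (a x)) (hw0 x)
    refine this.trans (le_of_eq ?_)
    ring
  have i1 : Integrable (fun x => ε / (2 * (M + M' + 1)) *
      (|a_ n x| ^ p * w x + |a x| ^ p * w x)) μ := ((hai_ n).add hai).const_mul _
  have i2 : Integrable (fun x => C * (ph p (a_ n x) * (a_ n x - a x) * w x
        - ph p (a x) * (a_ n x - a x) * w x)) μ := ((hp2 n).sub (hp1 n)).const_mul C
  rw [integral_add i1 i2,
    integral_const_mul, integral_const_mul, integral_add (hai_ n) hai,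
    integral_sub (hp2 n) (hp1 n)] at this
  refine this.trans_lt ?_
  have t1 : ε / (2 * (M + M' + 1)) * ((∫ x, |a_ n x| ^ p * w x ∂μ) + M') < ε / 2 := by
    calc _ ≤ ε / (2 * (M + M' + 1)) * (M + M') := by have := hM n; gcongr
      _ < ε / (2 * (M + M' + 1)) * (M + M' + 1) := mul_lt_mul_of_pos_left (by linarith) (by positivity)
      _ = ε / 2 := by field_simp
  have t2 : C * ((∫ x, ph p (a_ n x) * (a_ n x - a x) * w x ∂μ) -
      ∫ x, ph p (a x) * (a_ n x - a x) * w x ∂μ) ≤ ε / 2 := by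
    calc _ ≤ C * (2 * δ) := by gcongr; linarith
      _ ≤ (C + 1) * (2 * δ) := by gcongr; linarith
      _ = ε / 2 := by rw [hδ]; field_simp; ring
  linarith

end abs

section conc
variable {N : ℕ} {p : ℝ}

abbrev EN (N : ℕ) := EuclideanSpace ℝ (Fin N)

lemma weakL (hp : 1 < p) {v_ : ℕ → EN N → ℝ} {K : ℝ} (hv : ∀ n, Measurable (v_ n))
    (hv1 : ∀ n, Integrable (v_ n)) (hvp : ∀ n, Integrable (fun x => |v_ n x| ^ p))
    (hK : ∀ n, ∫ x, |v_ n x| ^ p ≤ K)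
    (hφ : ∀ φ : EN N → ℝ, Continuous φ → HasCompactSupport φ →
      Tendsto (fun n => ∫ x, v_ n x * φ x) atTop (nhds 0))
    {g : EN N → ℝ} (hg : Measurable g) {k : ℝ} (hgk : ∀ x, |g x| ≤ k)
    {R : ℝ} (hgs : ∀ x, x ∉ closedBall 0 R → g x = 0) :
    Tendsto (fun n => ∫ x, v_ n x * g x) atTop (nhds 0) := by
  have hp0 : 0 < p := by linarith
  have hK0 : 0 ≤ K := le_trans (integral_nonneg fun x => Real.rpow_nonneg (abs_nonneg _) _) (hK 0)
  obtain ⟨q, hpq⟩ : ∃ q, p.HolderConjugate q := ⟨_, Real.HolderConjugate.conjExponent hp⟩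
  have hq0 : 0 < q := hpq.symm.pos
  have hk0 : 0 ≤ k := (abs_nonneg _).trans (hgk 0)
  have hgm : MemLp g (ENNReal.ofReal q) := by
    have h1 : MemLp ((closedBall (0 : EN N) R).indicator (fun _ => k)) (ENNReal.ofReal q) :=
      memLp_indicator_const _ measurableSet_closedBall _ (Or.inr measure_closedBall_lt_top.ne)
    refine h1.mono hg.aestronglyMeasurable (ae_of_all _ fun x => ?_)
    by_cases hx : x ∈ closedBall 0 R
    · simp only [hx, indicator_of_mem, Real.norm_eq_abs, abs_of_nonneg hk0]; exact hgk x
    · rw [hgs x hx]; simp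
  have hvm : ∀ n, MemLp (v_ n) (ENNReal.ofReal p) := by
    intro n
    rw [← integrable_norm_rpow_iff (hv n).aestronglyMeasurable (by simpa using hp0) (by simp),
      ENNReal.toReal_ofReal hp0.le]
    exact hvp n
  rw [Metric.tendsto_atTop']
  suffices H : ∀ ε > 0, ∀ᶠ n in atTop, |∫ x, v_ n x * g x| < ε by
    intro ε hε
    obtain ⟨n0, hn0⟩ := eventually_atTop.1 (H ε hε)
    refine ⟨n0, fun n hn => ?_⟩
    rw [Real.dist_eq, sub_zero]
    exact hn0 n hn.le
  intro ε hε
  set c : ℝ := ε / (2 * (K ^ (1 / p) + 1)) with hc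
  have hKp : 0 ≤ K ^ (1 / p) := by positivity
  have hc0 : 0 < c := by positivity
  obtain ⟨ψ, hψs, hψε, hψc, hψm⟩ := hgm.exists_hasCompactSupport_integral_rpow_sub_le hq0
    (ε := c ^ q) (by positivity)
  obtain ⟨B, hB⟩ := hψs.exists_bound_of_continuous hψc
  have h := hφ ψ hψc hψs
  filter_upwards [h.eventually (Metric.ball_mem_nhds 0 (half_pos hε))] with n hn
  rw [Real.dist_eq, sub_zero] at hn
  have i1 : Integrable (fun x => v_ n x * g x) :=
    (hv1 n).mul_bdd (c := k) hg.aestronglyMeasurable (ae_of_all _ hgk)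
  have i2 : Integrable (fun x => v_ n x * ψ x) :=
    (hv1 n).mul_bdd (c := B) hψc.aestronglyMeasurable (ae_of_all _ hB)
  have e : ∫ x, v_ n x * g x = (∫ x, v_ n x * ψ x) + ∫ x, v_ n x * (g x - ψ x) := by
    have : ∫ x, v_ n x * (g x - ψ x) = (∫ x, v_ n x * g x) - ∫ x, v_ n x * ψ x := by
      rw [← integral_sub i1 i2]; simp only [mul_sub]
    linarith
  have e2 : |∫ x, v_ n x * (g x - ψ x)| ≤ K ^ (1 / p) * c := by
    calc _ ≤ ∫ x, ‖v_ n x‖ * ‖(g - ψ) x‖ := by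
          rw [← Real.norm_eq_abs]
          refine (norm_integral_le_integral_norm _).trans (le_of_eq ?_)
          simp only [norm_mul, Pi.sub_apply]
      _ ≤ _ := integral_mul_norm_le_Lp_mul_Lq hpq (hvm n) (hgm.sub hψm)
      _ ≤ K ^ (1 / p) * (c ^ q) ^ (1 / q) := by
          have h1 : ∫ x, ‖v_ n x‖ ^ p ≤ K := hK n
          have h2 : ∫ x, ‖(g - ψ) x‖ ^ q ≤ c ^ q := hψε
          have h3 : 0 ≤ ∫ x, ‖v_ n x‖ ^ p := integral_nonneg fun x => by positivity
          have h4 : 0 ≤ ∫ x, ‖(g - ψ) x‖ ^ q := integral_nonneg fun x => by positivity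
          have := hpq.symm.pos
          gcongr
      _ = _ := by rw [← Real.rpow_mul hc0.le, mul_one_div_cancel hq0.ne', Real.rpow_one]
  have e3 : K ^ (1 / p) * c < ε / 2 := by
    calc _ < (K ^ (1 / p) + 1) * c := by gcongr; linarith
      _ = ε / 2 := by rw [hc]; field_simp
  rw [e]
  exact (abs_add_le _ _).trans_lt (by linarith)

lemma fub (hp : 1 < p) {v_ : ℕ → EN N → ℝ} {K : ℝ} (hv : ∀ n, Measurable (v_ n))
    (hv1 : ∀ n, Integrable (v_ n)) (hvp : ∀ n, Integrable (fun x => |v_ n x| ^ p))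
    (hK : ∀ n, ∫ x, |v_ n x| ^ p ≤ K)
    (hφ : ∀ φ : EN N → ℝ, Continuous φ → HasCompactSupport φ →
      Tendsto (fun n => ∫ x, v_ n x * φ x) atTop (nhds 0))
    {H : EN N × EN N → ℝ} (hH : Measurable H) {k R : ℝ} (hHk : ∀ z, |H z| ≤ k)
    (hHs : ∀ z, ¬ (z.1 ∈ closedBall 0 R ∧ z.2 ∈ closedBall 0 R) → H z = 0) :
    (∀ n, Integrable (fun z : EN N × EN N => v_ n z.1 * H z)) ∧
    Tendsto (fun n => ∫ z : EN N × EN N, v_ n z.1 * H z) atTop (nhds 0) := by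
  have hk0 : 0 ≤ k := (abs_nonneg _).trans (hHk 0)
  have hind : Integrable ((closedBall (0 : EN N) R).indicator (fun _ => k)) :=
    (integrable_indicator_iff measurableSet_closedBall).2
      (integrableOn_const measure_closedBall_lt_top.ne)
  have hb : ∀ x y, |H (x, y)| ≤ (closedBall (0 : EN N) R).indicator (fun _ => k) y := by
    intro x y
    by_cases hy : y ∈ closedBall 0 R
    · rw [indicator_of_mem hy]; exact hHk _
    · rw [hHs (x, y) (fun h => hy h.2), indicator_of_notMem hy, abs_zero]
  have hi : ∀ n, Integrable (fun z : EN N × EN N => v_ n z.1 * H z) := by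
    intro n
    have h1 : Integrable (fun z : EN N × EN N =>
        |v_ n z.1| * (closedBall (0 : EN N) R).indicator (fun _ => k) z.2) :=
      (hv1 n).abs.mul_prod hind
    have := hv n
    refine h1.mono' (by fun_prop) (ae_of_all _ fun z => ?_)
    rw [Real.norm_eq_abs, abs_mul]
    exact mul_le_mul_of_nonneg_left (hb z.1 z.2) (abs_nonneg _)
  refine ⟨hi, ?_⟩
  have he : ∀ n, ∫ z : EN N × EN N, v_ n z.1 * H z = ∫ x, v_ n x * ∫ y, H (x, y) := by
    intro n
    rw [Measure.volume_eq_prod, integral_prod _ (hi n)]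
    simp only [integral_const_mul]
  simp only [he]
  refine weakL hp hv hv1 hvp hK hφ (g := fun x => ∫ y, H (x, y))
    (hH.stronglyMeasurable.integral_prod_right').measurable
    (k := ∫ y, (closedBall (0 : EN N) R).indicator (fun _ => k) y) (R := R) ?_ ?_
  · intro x
    rw [← Real.norm_eq_abs]
    exact norm_integral_le_of_norm_le hind (ae_of_all _ (hb x))
  · intro x hx
    simp only [hHs (x, _) (fun h => hx h.1), integral_zero]

lemma weak_pair (hp : 1 < p) {v_ : ℕ → EN N → ℝ} {K : ℝ} (hv : ∀ n, Measurable (v_ n))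
    (hv1 : ∀ n, Integrable (v_ n)) (hvp : ∀ n, Integrable (fun x => |v_ n x| ^ p))
    (hK : ∀ n, ∫ x, |v_ n x| ^ p ≤ K)
    (hφ : ∀ φ : EN N → ℝ, Continuous φ → HasCompactSupport φ →
      Tendsto (fun n => ∫ x, v_ n x * φ x) atTop (nhds 0))
    {w a : EN N × EN N → ℝ} (hw : Measurable w) (hw0 : ∀ z, 0 ≤ w z) (ha : Measurable a)
    (hai : Integrable (fun z => |a z| ^ p * w z))
    (hvi : ∀ n, Integrable (fun z => |v_ n z.1 - v_ n z.2| ^ p * w z))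
    {M : ℝ} (hM : ∀ n, ∫ z, |v_ n z.1 - v_ n z.2| ^ p * w z ≤ M) :
    Tendsto (fun n => ∫ z, ph p (a z) * (v_ n z.1 - v_ n z.2) * w z) atTop (nhds 0) := by
  have hM0 : 0 ≤ M := le_trans (integral_nonneg fun x =>
    mul_nonneg (Real.rpow_nonneg (abs_nonneg _) _) (hw0 x)) (hM 0)
  have hphm := (ph_cont hp).measurable
  set G : EN N × EN N → ℝ := fun z => ph p (a z) * w z with hG
  have hGm : Measurable G := by fun_prop
  let S : ℕ → Set (EN N × EN N) := fun k =>
    {z | ‖z.1‖ ≤ k} ∩ {z | ‖z.2‖ ≤ k} ∩ {z | |G z| ≤ k}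
  have hS : ∀ k, MeasurableSet (S k) := fun k =>
    ((measurableSet_le (by fun_prop) (by fun_prop)).inter
      (measurableSet_le (by fun_prop) (by fun_prop))).inter
      (measurableSet_le (by fun_prop) (by fun_prop))
  have hpi : ∀ n, Integrable (fun z => ph p (a z) * (v_ n z.1 - v_ n z.2) * w z) := fun n =>
    int_pair hp hw hw0 ha (b := fun z => v_ n z.1 - v_ n z.2)
      (by have := hv n; fun_prop) hai (hvi n)
  have hSt : Tendsto (fun k => ∫ z in (S k)ᶜ, |a z| ^ p * w z) atTop (nhds 0) := by
    have h0 : Tendsto (fun k => ∫ z, (S k)ᶜ.indicator (fun z => |a z| ^ p * w z) z) atTop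
        (nhds (∫ z : EN N × EN N, (0 : ℝ))) := by
      refine tendsto_integral_of_dominated_convergence (fun z => |a z| ^ p * w z) (fun k => ?_) hai
        (fun k => ae_of_all _ fun z => ?_) (ae_of_all _ fun z => ?_)
      · exact hai.aestronglyMeasurable.indicator (hS k).compl
      · refine (norm_indicator_le_norm_self _ _).trans (le_of_eq ?_)
        rw [Real.norm_eq_abs,
          abs_of_nonneg (mul_nonneg (Real.rpow_nonneg (abs_nonneg _) _) (hw0 z))]
      · refine tendsto_const_nhds.congr' ?_
        obtain ⟨k1, h1⟩ := exists_nat_ge ‖z.1‖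
        obtain ⟨k2, h2⟩ := exists_nat_ge ‖z.2‖
        obtain ⟨k3, h3⟩ := exists_nat_ge |G z|
        filter_upwards [eventually_ge_atTop k1, eventually_ge_atTop k2, eventually_ge_atTop k3]
          with k hk1 hk2 hk3
        have : z ∈ S k := ⟨⟨h1.trans (by exact_mod_cast hk1), h2.trans (by exact_mod_cast hk2)⟩,
          h3.trans (by exact_mod_cast hk3)⟩
        simp [this]
    simpa only [integral_indicator (hS _).compl, integral_zero] using h0
  have hmain : ∀ k, Tendsto (fun n => ∫ z in S k, ph p (a z) * (v_ n z.1 - v_ n z.2) * w z)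
      atTop (nhds 0) := by
    intro k
    set H : EN N × EN N → ℝ := (S k).indicator G with hH
    have hHm : Measurable H := hGm.indicator (hS k)
    have hHk : ∀ z, |H z| ≤ k := by
      intro z
      by_cases hz : z ∈ S k
      · simp only [hH, hz, indicator_of_mem]; exact hz.2
      · simp [hH, hz]
    have hHs : ∀ z, ¬ (z.1 ∈ closedBall 0 (k : ℝ) ∧ z.2 ∈ closedBall 0 (k : ℝ)) → H z = 0 := by
      intro z hz
      refine indicator_of_notMem (fun h => hz ?_) _
      simpa using h.1
    obtain ⟨i1, t1⟩ := fub hp hv hv1 hvp hK hφ hHm hHk hHs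
    obtain ⟨i2, t2⟩ := fub hp hv hv1 hvp hK hφ (H := fun z => H z.swap)
      (hHm.comp measurable_swap) (fun z => hHk _)
      (fun z hz => hHs z.swap (fun h => hz ⟨h.2, h.1⟩))
    have i2' : ∀ n, Integrable (fun z : EN N × EN N => v_ n z.2 * H z) := fun n => (i2 n).swap
    have e2 : ∀ n, ∫ z : EN N × EN N, v_ n z.1 * H z.swap = ∫ z : EN N × EN N, v_ n z.2 * H z :=
      fun n => integral_prod_swap (μ := volume) (ν := volume)
        (fun z : EN N × EN N => v_ n z.2 * H z)
    simp only [e2] at t2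
    have := t1.sub t2
    rw [sub_zero] at this
    refine this.congr fun n => ?_
    rw [← integral_sub (i1 n) (i2' n), ← integral_indicator (hS k)]
    refine integral_congr_ae (ae_of_all _ fun z => ?_)
    by_cases hz : z ∈ S k
    · simp only [hH, hz, indicator_of_mem, hG]; ring
    · simp [hH, hz]
  rw [Metric.tendsto_atTop']
  suffices H : ∀ ε > 0, ∀ᶠ n in atTop,
      |∫ z, ph p (a z) * (v_ n z.1 - v_ n z.2) * w z| < ε by
    intro ε hε
    obtain ⟨n0, hn0⟩ := eventually_atTop.1 (H ε hε)
    refine ⟨n0, fun n hn => ?_⟩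
    rw [Real.dist_eq, sub_zero]
    exact hn0 n hn.le
  intro ε hε
  obtain ⟨C, hC0, hC⟩ := young1 hp (ε := ε / (3 * (M + 1))) (by positivity)
  have hSC : Tendsto (fun k => C * ∫ z in (S k)ᶜ, |a z| ^ p * w z) atTop (nhds 0) := by
    simpa using hSt.const_mul C
  obtain ⟨k, hk⟩ := (hSC.eventually (gt_mem_nhds (show 0 < ε / 3 by positivity))).exists
  filter_upwards [(hmain k).eventually (Metric.ball_mem_nhds 0 (show 0 < ε / 3 by positivity))]
    with n hn
  rw [Real.dist_eq, sub_zero] at hn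
  rw [← integral_add_compl (hS k) (hpi n)]
  have j1 : Integrable (fun z => C * (|a z| ^ p * w z)) (volume.restrict (S k)ᶜ) :=
    (hai.const_mul C).integrableOn
  have j2 : Integrable (fun z => ε / (3 * (M + 1)) * (|v_ n z.1 - v_ n z.2| ^ p * w z))
      (volume.restrict (S k)ᶜ) := ((hvi n).const_mul _).integrableOn
  have h2 : |∫ z in (S k)ᶜ, ph p (a z) * (v_ n z.1 - v_ n z.2) * w z| ≤
      C * (∫ z in (S k)ᶜ, |a z| ^ p * w z) +
      ε / (3 * (M + 1)) * ∫ z in (S k)ᶜ, |v_ n z.1 - v_ n z.2| ^ p * w z := by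
    rw [← integral_const_mul, ← integral_const_mul, ← integral_add j1 j2, ← Real.norm_eq_abs]
    refine norm_integral_le_of_norm_le (j1.add j2) (ae_of_all _ fun z => ?_)
    rw [Real.norm_eq_abs, abs_mul, abs_mul, ph_abs hp, abs_of_nonneg (hw0 z)]
    have := mul_le_mul_of_nonneg_right
      (hC _ _ (abs_nonneg (a z)) (abs_nonneg (v_ n z.1 - v_ n z.2))) (hw0 z)
    refine this.trans (le_of_eq ?_)
    ring
  have h3 : ∫ z in (S k)ᶜ, |v_ n z.1 - v_ n z.2| ^ p * w z ≤ M :=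
    (setIntegral_le_integral (hvi n) (ae_of_all _ fun z =>
      mul_nonneg (Real.rpow_nonneg (abs_nonneg _) _) (hw0 z))).trans (hM n)
  have h4 : ε / (3 * (M + 1)) * ∫ z in (S k)ᶜ, |v_ n z.1 - v_ n z.2| ^ p * w z ≤ ε / 3 := by
    calc _ ≤ ε / (3 * (M + 1)) * (M + 1) := by gcongr; linarith
      _ = ε / 3 := by field_simp
  exact (abs_add_le _ _).trans_lt (by linarith)

/-- Poincare inequality. -/
lemma poinc (hN : 0 < N) {Ω : Set (EN N)} (hΩb : Bornology.IsBounded Ω) {r : ℝ} (hr : 0 < r)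
    (hp : 1 < p) :
    ∃ C : ℝ, 0 ≤ C ∧ ∀ v : EN N → ℝ, Measurable v → (∀ x, x ∉ Ω → v x = 0) →
      Integrable (fun z : EN N × EN N => |v z.1 - v z.2| ^ p * (‖z.1 - z.2‖ ^ r)⁻¹) →
      Integrable (fun x => |v x| ^ p) ∧
      ∫ x, |v x| ^ p ≤ C * ∫ z : EN N × EN N, |v z.1 - v z.2| ^ p * (‖z.1 - z.2‖ ^ r)⁻¹ := by
  have hp0 : 0 < p := by linarith
  obtain ⟨R, hR0, hR⟩ : ∃ R : ℝ, 0 < R ∧ Ω ⊆ ball 0 R := by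
    obtain ⟨R, hR⟩ := hΩb.subset_ball 0
    exact ⟨max R 1, lt_max_of_lt_right one_pos, hR.trans (ball_subset_ball (le_max_left _ _))⟩
  have : Nonempty (Fin N) := ⟨⟨0, hN⟩⟩
  obtain ⟨e, he⟩ := exists_norm_eq (EN N) (c := 2 * R) (by positivity)
  set B : Set (EN N) := ball e R with hB
  have hBn : ∀ y ∈ B, R < ‖y‖ ∧ ‖y‖ < 3 * R := by
    intro y hy
    rw [hB, mem_ball_iff_norm] at hy
    have h1 := norm_sub_norm_le e y
    have h2 := norm_sub_norm_le y e
    rw [norm_sub_rev] at h1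
    constructor <;> linarith
  set c : ℝ := (volume B).toReal with hc
  have hc0 : 0 < c := ENNReal.toReal_pos (measure_ball_pos _ _ hR0).ne' measure_ball_lt_top.ne
  set D : ℝ := (4 * R) ^ r with hD
  have hD0 : 0 < D := by positivity
  refine ⟨D / c, by positivity, fun v hv hvΩ hvi => ?_⟩
  have hpt : ∀ z : EN N × EN N, |v z.1| ^ p * B.indicator (fun _ => (1 : ℝ)) z.2 ≤
      D * (|v z.1 - v z.2| ^ p * (‖z.1 - z.2‖ ^ r)⁻¹) := by
    intro z
    have hnn : 0 ≤ D * (|v z.1 - v z.2| ^ p * (‖z.1 - z.2‖ ^ r)⁻¹) := by positivity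
    by_cases h2 : z.2 ∈ B
    · by_cases h1 : z.1 ∈ Ω
      · have hx : ‖z.1‖ < R := by simpa using hR h1
        obtain ⟨hy1, hy2⟩ := hBn _ h2
        have hv2 : v z.2 = 0 := hvΩ _ (fun h => by
          have : ‖z.2‖ < R := by simpa using hR h
          linarith)
        have hne : 0 < ‖z.1 - z.2‖ := by
          have := norm_sub_norm_le z.2 z.1
          rw [norm_sub_rev] at this
          linarith
        have hle : ‖z.1 - z.2‖ ≤ 4 * R := by
          have := norm_sub_le z.1 z.2
          linarith
        have h3 : ‖z.1 - z.2‖ ^ r ≤ D := Real.rpow_le_rpow hne.le hle hr.le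
        have h4 : 0 < ‖z.1 - z.2‖ ^ r := by positivity
        have h5 : 1 ≤ D * (‖z.1 - z.2‖ ^ r)⁻¹ := by
          rw [← div_eq_mul_inv, le_div_iff₀ h4]; linarith
        simp only [h2, indicator_of_mem, hv2, sub_zero, mul_one]
        have : 0 ≤ |v z.1| ^ p := by positivity
        nlinarith
      · rw [hvΩ _ h1, abs_zero, Real.zero_rpow hp0.ne', zero_mul]
        simpa [hvΩ _ h1] using hnn
    · simp only [h2, not_false_eq_true, indicator_of_notMem, mul_zero]; exact hnn
  have hBm : MeasurableSet B := measurableSet_ball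
  have hintg : Integrable (fun z : EN N × EN N =>
      |v z.1| ^ p * B.indicator (fun _ => (1 : ℝ)) z.2) := by
    have hbm : Measurable (B.indicator (fun _ => (1 : ℝ))) := measurable_const.indicator hBm
    refine (hvi.const_mul D).mono' (by fun_prop) (ae_of_all _ fun z => ?_)
    rw [Real.norm_eq_abs, abs_of_nonneg]
    · exact hpt z
    · exact mul_nonneg (by positivity) (indicator_nonneg (fun _ _ => zero_le_one) _)
  have hinner : ∀ x, ∫ y, |v x| ^ p * B.indicator (fun _ => (1 : ℝ)) y = |v x| ^ p * c := by
    intro x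
    rw [integral_const_mul, integral_indicator hBm]
    simp [hc, Measure.real]
  have h1 : Integrable (fun x => |v x| ^ p * c) := by
    have := hintg.integral_prod_left
    simpa only [hinner] using this
  have h2 : Integrable (fun x => |v x| ^ p) := by
    have := h1.mul_const c⁻¹
    simpa only [mul_assoc, mul_inv_cancel₀ hc0.ne', mul_one] using this
  refine ⟨h2, ?_⟩
  have h3 : (∫ x, |v x| ^ p) * c ≤
      D * ∫ z : EN N × EN N, |v z.1 - v z.2| ^ p * (‖z.1 - z.2‖ ^ r)⁻¹ := by
    have h4 := integral_mono hintg (hvi.const_mul D) hpt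
    rw [integral_const_mul, Measure.volume_eq_prod, integral_prod _ hintg] at h4
    simp only [hinner, integral_mul_const] at h4
    exact h4
  rw [div_mul_eq_mul_div, le_div_iff₀ hc0]
  exact h3

lemma int_one {Ω : Set (EN N)} (hΩo : IsOpen Ω) (hΩb : Bornology.IsBounded Ω) (hp : 1 < p)
    {v : EN N → ℝ} (hv : Measurable v) (hvΩ : ∀ x, x ∉ Ω → v x = 0)
    (hvi : Integrable (fun x => |v x| ^ p)) : Integrable v := by
  have hind : Integrable (Ω.indicator (fun _ => (1 : ℝ))) :=
    (integrable_indicator_iff hΩo.measurableSet).2 (integrableOn_const hΩb.measure_lt_top.ne)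
  refine (hind.add hvi).mono' hv.aestronglyMeasurable (ae_of_all _ fun x => ?_)
  simp only [Pi.add_apply, Real.norm_eq_abs]
  by_cases hx : x ∈ Ω
  · simp only [hx, indicator_of_mem]
    rcases le_total |v x| 1 with h | h
    · have : 0 ≤ |v x| ^ p := by positivity
      linarith
    · have := Real.self_le_rpow_of_one_le h hp.le
      linarith
  · rw [hvΩ x hx]; simp [hx, Real.zero_rpow (show p ≠ 0 by linarith)]

end conc

set_option maxHeartbeats 2000000 in
/-- the fractional `p`-Laplacian operator `A` is of type `(S₊)`:
if `uₙ ⇀ u` weakly in `W₀^{s,p}(Ω)` and `limsup ⟨A uₙ, uₙ - u⟩ ≤ 0`, then `uₙ → u`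
strongly, i.e. `‖uₙ - u‖ → 0`. -/
theorem stmt7 (N : ℕ) (Ω : Set (EuclideanSpace ℝ (Fin N)))
    (hΩo : IsOpen Ω) (hΩc : IsConnected Ω) (hΩb : Bornology.IsBounded Ω)
    (s p : ℝ) (hs0 : 0 < s) (hs1 : s < 1) (hp : 1 < p)
    (u_ : ℕ → EuclideanSpace ℝ (Fin N) → ℝ) (u : EuclideanSpace ℝ (Fin N) → ℝ)
    (hmem : ∀ n, memW0 N s p Ω (u_ n)) (hmemu : memW0 N s p Ω u)
    (hweak : weakConv N s p u_ u)
    (hlimsup : limsup (fun n => fracPair N s p (u_ n) (fun x => u_ n x - u x)) atTop ≤ 0) :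
    Tendsto (fun n => gagNorm N s p (fun x => u_ n x - u x)) atTop (nhds 0) := by
  have hp0 : 0 < p := by linarith
  rcases Nat.eq_zero_or_pos N with hN | hN
  · subst hN
    have : ∀ v, gagNorm 0 s p v = 0 := by
      intro v
      have h : ∀ x y : EuclideanSpace ℝ (Fin 0), v x = v y := fun x y => by
        rw [Subsingleton.elim x y]
      have h2 : ∀ x y : EuclideanSpace ℝ (Fin 0), |v x - v y| = 0 := fun x y => by
        rw [h x y]; simp
      unfold gagNorm gagE
      simp only [h2, Real.zero_rpow hp0.ne', zero_div, integral_zero]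
      exact Real.zero_rpow (by positivity)
    simp only [this]
    exact tendsto_const_nhds
  set r : ℝ := (N : ℝ) + s * p with hrdef
  have hr : 0 < r := by positivity
  set w : EN N × EN N → ℝ := fun z => (‖z.1 - z.2‖ ^ r)⁻¹ with hwdef
  have hw : Measurable w := by fun_prop
  have hw0 : ∀ z, 0 ≤ w z := fun z => by positivity
  have hE : ∀ v : EN N → ℝ, Integrable (fun z : EN N × EN N => |v z.1 - v z.2| ^ p * w z) →
      gagE N s p v = ∫ z : EN N × EN N, |v z.1 - v z.2| ^ p * w z := by
    intro v hv
    rw [Measure.volume_eq_prod, integral_prod _ hv]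
    rfl
  have hm_ := fun n => (hmem n).1
  have hm := hmemu.1
  have hi_ : ∀ n, Integrable (fun z : EN N × EN N => |u_ n z.1 - u_ n z.2| ^ p * w z) :=
    fun n => (hmem n).2.1
  have hi : Integrable (fun z : EN N × EN N => |u z.1 - u z.2| ^ p * w z) := hmemu.2.1
  have ha_ : ∀ n, Measurable (fun z : EN N × EN N => u_ n z.1 - u_ n z.2) := fun n => by
    have := hm_ n
    fun_prop
  have ha : Measurable (fun z : EN N × EN N => u z.1 - u z.2) := by fun_prop
  obtain ⟨⟨M0, hM0⟩, hφ⟩ := hweak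
  have hnn : ∀ v : EN N → ℝ, 0 ≤ ∫ z : EN N × EN N, |v z.1 - v z.2| ^ p * w z := fun v =>
    integral_nonneg fun z => mul_nonneg (Real.rpow_nonneg (abs_nonneg _) _) (hw0 z)
  have hM : ∀ n, ∫ z : EN N × EN N, |u_ n z.1 - u_ n z.2| ^ p * w z ≤ M0 ^ p := by
    intro n
    have h1 := hM0 n
    unfold gagNorm at h1
    rw [hE (u_ n) (hi_ n)] at h1
    have h2 := Real.rpow_le_rpow (Real.rpow_nonneg (hnn _) _) h1 hp0.le
    rwa [← Real.rpow_mul (hnn _), one_div_mul_cancel hp0.ne', Real.rpow_one] at h2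
  -- the differences
  have hvm : ∀ n, Measurable (fun x => u_ n x - u x) := fun n => (hm_ n).sub hm
  have hre : ∀ n (z : EN N × EN N), (u_ n z.1 - u z.1) - (u_ n z.2 - u z.2)
      = (u_ n z.1 - u_ n z.2) - (u z.1 - u z.2) := fun n z => by ring
  have hvi : ∀ n, Integrable (fun z : EN N × EN N =>
      |(u_ n z.1 - u z.1) - (u_ n z.2 - u z.2)| ^ p * w z) := by
    intro n
    simp only [hre]
    exact int_sub hp hw hw0 (ha_ n) ha (hi_ n) hi
  set M1 : ℝ := 2 ^ p * (M0 ^ p + ∫ z : EN N × EN N, |u z.1 - u z.2| ^ p * w z) with hM1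
  have hvM : ∀ n, ∫ z : EN N × EN N,
      |(u_ n z.1 - u z.1) - (u_ n z.2 - u z.2)| ^ p * w z ≤ M1 := by
    intro n
    calc _ ≤ ∫ z : EN N × EN N, 2 ^ p * (|u_ n z.1 - u_ n z.2| ^ p * w z
            + |u z.1 - u z.2| ^ p * w z) := by
          refine integral_mono (hvi n) (((hi_ n).add hi).const_mul _) fun z => ?_
          have := mul_le_mul_of_nonneg_right
            (abs_sub_rpow_le hp (u_ n z.1 - u_ n z.2) (u z.1 - u z.2)) (hw0 z)
          simp only [hre]
          linarith
      _ = 2 ^ p * ((∫ z : EN N × EN N, |u_ n z.1 - u_ n z.2| ^ p * w z)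
            + ∫ z : EN N × EN N, |u z.1 - u z.2| ^ p * w z) := by
          rw [integral_const_mul, integral_add (hi_ n) hi]
      _ ≤ _ := by have := hM n; rw [hM1]; gcongr
  obtain ⟨C, hC0, hC⟩ := poinc hN hΩb hr hp
  have hL := hC u hm hmemu.2.2 hi
  have hL_ := fun n => hC (u_ n) (hm_ n) (hmem n).2.2 (hi_ n)
  have hvΩ : ∀ n x, x ∉ Ω → u_ n x - u x = 0 := fun n x hx => by
    rw [(hmem n).2.2 x hx, hmemu.2.2 x hx, sub_zero]
  have hLv := fun n => hC (fun x => u_ n x - u x) (hvm n) (hvΩ n) (hvi n)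
  have hu1 : Integrable u := int_one hΩo hΩb hp hm hmemu.2.2 hL.1
  have hu1_ : ∀ n, Integrable (u_ n) := fun n =>
    int_one hΩo hΩb hp (hm_ n) (hmem n).2.2 (hL_ n).1
  have hweak' : ∀ φ : EN N → ℝ, Continuous φ → HasCompactSupport φ →
      Tendsto (fun n => ∫ x, (u_ n x - u x) * φ x) atTop (nhds 0) := by
    intro φ hφc hφs
    obtain ⟨B, hB⟩ := hφs.exists_bound_of_continuous hφc
    have h1 := (hφ φ hφc hφs).sub_const (∫ x, u x * φ x)
    rw [sub_self] at h1
    refine h1.congr fun n => ?_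
    rw [← integral_sub ((hu1_ n).mul_bdd (c := B) hφc.aestronglyMeasurable (ae_of_all _ hB))
      (hu1.mul_bdd (c := B) hφc.aestronglyMeasurable (ae_of_all _ hB))]
    simp only [sub_mul]
  have hpair := weak_pair hp (v_ := fun n x => u_ n x - u x) (K := C * M1) hvm
    (fun n => (hu1_ n).sub hu1) (fun n => (hLv n).1)
    (fun n => (hLv n).2.trans (mul_le_mul_of_nonneg_left (hvM n) hC0))
    hweak' hw hw0 ha hi hvi hvM
  simp only [hre] at hpair
  have hfp : ∀ n, fracPair N s p (u_ n) (fun x => u_ n x - u x) =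
      ∫ z : EN N × EN N, ph p (u_ n z.1 - u_ n z.2) *
        ((u_ n z.1 - u_ n z.2) - (u z.1 - u z.2)) * w z := by
    intro n
    have hintg := int_pair hp hw hw0 (ha_ n) ((ha_ n).sub ha) (hi_ n)
      (int_sub hp hw hw0 (ha_ n) ha (hi_ n) hi)
    simp only [Pi.sub_apply] at hintg
    rw [Measure.volume_eq_prod, integral_prod _ hintg]
    unfold fracPair ph
    refine integral_congr_ae (ae_of_all _ fun x => integral_congr_ae (ae_of_all _ fun y => ?_))
    simp only [hwdef, div_eq_mul_inv]
    ring
  simp only [hfp] at hlimsup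
  have hfin := abs_main (μ := volume) (a_ := fun n (z : EN N × EN N) => u_ n z.1 - u_ n z.2)
    (a := fun z : EN N × EN N => u z.1 - u z.2) (M := M0 ^ p) hp hw hw0 ha_ ha hi_ hi hM hpair hlimsup
  have hgag : ∀ n, gagNorm N s p (fun x => u_ n x - u x) =
      (∫ z : EN N × EN N, |(u_ n z.1 - u_ n z.2) - (u z.1 - u z.2)| ^ p * w z) ^ (1 / p) := by
    intro n
    unfold gagNorm
    rw [hE (fun x => u_ n x - u x) (hvi n)]
    simp only [hre]
  simp only [hgag]
  have hq : 0 < 1 / p := by positivity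
  have := hfin.rpow_const (p := 1 / p) (Or.inr hq.le)
  rwa [Real.zero_rpow hq.ne'] at this


end
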